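/- arXiv:2304.00273 — 3 statements merged into one kernel-verified Lean document; each statement's English description precedes it below -/
import Mathlib

section
/- Let Z be a finite-dimensional Zinbiel superalgebra over a field, let I be a minimal ideal of Z, and let J be a minimal right ideal of Z such that J ⊆ I. Then I = J. -/
open Module Submodule

/-- A Zinbiel superalgebra over a field `K`: a `K`-vector space `Z` with a bilinear
multiplication and a direct sum decomposition `Z = Z₀ ⊕ Z₁` such that
`Zᵢ·Zⱼ ⊆ Z_{i+j (mod 2)}` and, for all homogeneous `x, y, z`,
`(x·y)·z = x·(y·z + (−1)^{|y||z|} z·y)`. -/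
structure ZinbielSuper (K : Type*) [Field K] (Z : Type*) [AddCommGroup Z] [Module K Z] where
  mul : Z →ₗ[K] Z →ₗ[K] Z
  Z0 : Submodule K Z
  Z1 : Submodule K Z
  compl : IsCompl Z0 Z1
  mul00 : ∀ x ∈ Z0, ∀ y ∈ Z0, mul x y ∈ Z0
  mul01 : ∀ x ∈ Z0, ∀ y ∈ Z1, mul x y ∈ Z1
  mul10 : ∀ x ∈ Z1, ∀ y ∈ Z0, mul x y ∈ Z1
  mul11 : ∀ x ∈ Z1, ∀ y ∈ Z1, mul x y ∈ Z0
  zinb_even : ∀ x y z : Z, (x ∈ Z0 ∨ x ∈ Z1) → (y ∈ Z0 ∨ y ∈ Z1) → (z ∈ Z0 ∨ z ∈ Z1) →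
    (y ∈ Z0 ∨ z ∈ Z0) → mul (mul x y) z = mul x (mul y z + mul z y)
  zinb_odd : ∀ x y z : Z, (x ∈ Z0 ∨ x ∈ Z1) → y ∈ Z1 → z ∈ Z1 →
    mul (mul x y) z = mul x (mul y z - mul z y)

variable {K : Type*} [Field K] {Z : Type*} [AddCommGroup Z] [Module K Z]

/-- The linear span of all products `a·b` with `a ∈ A`, `b ∈ B`. -/
def mulSub (mul : Z →ₗ[K] Z →ₗ[K] Z) (A B : Submodule K Z) : Submodule K Z :=
  Submodule.span K {z : Z | ∃ a ∈ A, ∃ b ∈ B, mul a b = z}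

/-- `I` is a (two-sided) ideal of the Zinbiel superalgebra: `Z·I ⊆ I` and `I·Z ⊆ I`. -/
def IsIdeal (S : ZinbielSuper K Z) (I : Submodule K Z) : Prop :=
  ∀ x : Z, ∀ a ∈ I, S.mul x a ∈ I ∧ S.mul a x ∈ I

/-- `I` is a right ideal of the Zinbiel superalgebra: `I·Z ⊆ I`. -/
def IsRightIdeal (S : ZinbielSuper K Z) (I : Submodule K Z) : Prop :=
  ∀ a ∈ I, ∀ x : Z, S.mul a x ∈ I

/-- `I` is a minimal ideal: it is a nonzero ideal and the only ideals contained in it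
are `0` and itself. -/
def IsMinimalIdeal (S : ZinbielSuper K Z) (I : Submodule K Z) : Prop :=
  IsIdeal S I ∧ I ≠ ⊥ ∧ ∀ J : Submodule K Z, IsIdeal S J → J ≤ I → J = ⊥ ∨ J = I

/-- `I` is a minimal right ideal: it is a nonzero right ideal and the only right ideals
contained in it are `0` and itself. -/
def IsMinimalRightIdeal (S : ZinbielSuper K Z) (I : Submodule K Z) : Prop :=
  IsRightIdeal S I ∧ I ≠ ⊥ ∧ ∀ J : Submodule K Z, IsRightIdeal S J → J ≤ I → J = ⊥ ∨ J = I

/-!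
Write `l` for left and `R` for right multiplication by elements of `Z`. If `y` is homogeneous, the
commutators of `l = l(y)` with the operators `R(l^k y)` are, up to sign, `l R(l^(k-1) y) l`, with
`l` in place of `R(l^(-1) y)`. Sandwiching an expression in the `R(l^k y)` between powers of `l`
therefore lowers its degree, and starting from the characteristic polynomial of `l` one finds that
`l` is nilpotent. Since `R(y)^(k+1)` is a multiple of `R(l^k y)`, right multiplication by `y` is
nilpotent too.

Right multiplications commute up to sign, so together they generate a nilpotent algebra; hence a
graded subalgebra `V ≠ 0` satisfies `V·V ≠ V`. This allows left multiplications to be treated one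
homogeneous element at a time, climbing from `V·V` to `V`, and they generate a nilpotent algebra
as well. So every nonzero ideal contains some `a ≠ 0` with `Z·a = a·Z = 0`. The line through `a` is
then an ideal, and minimal ideals are lines.
-/

section IdemSemiring

variable {R : Type*} [IdemSemiring R] {a g : R}

theorem one_add_pow_mul_le (hga : g * a ≤ a) (k : ℕ) : (1 + g) ^ k * a ≤ a := by
  induction k with
  | zero => rw [pow_zero, one_mul]
  | succ k ih =>
    calc (1 + g) ^ (k + 1) * a = (1 + g) ^ k * (a + g * a) := by
          rw [pow_succ, mul_assoc, add_mul, one_mul]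
      _ ≤ (1 + g) ^ k * a := mul_le_mul_right (add_le le_rfl hga) _
      _ ≤ a := ih

theorem add_pow_succ_le (h : (a + g) * ((a + g) * a) ≤ (a + g) * a) (k : ℕ) :
    (a + g) ^ (k + 1) ≤ (a + g) * a * (1 + (a + g)) ^ k + (a + g) * g ^ k := by
  set v := a + g with hv
  set d := 1 + v
  induction k with
  | zero => simp
  | succ k ih =>
    have g_pow_le : g ^ k ≤ d ^ k := pow_le_pow_left' (le_add_self.trans le_add_self) k
    have d_pow_le : d ^ k ≤ d ^ (k + 1) := pow_le_pow_right' le_self_add k.le_succ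
    calc v ^ (k + 1 + 1) ≤ v * (v * a * d ^ k + v * g ^ k) := by
          rw [pow_succ']
          exact mul_le_mul_right ih _
      _ = v * (v * a) * d ^ k + (v * a * g ^ k + v * g ^ (k + 1)) := by
          rw [pow_succ' g]
          nth_rw 3 [hv]
          simp only [mul_add, add_mul, mul_assoc]
      _ ≤ v * a * d ^ k + (v * a * d ^ k + v * g ^ (k + 1)) := by gcongr
      _ = v * a * d ^ k + v * g ^ (k + 1) := by rw [← add_assoc, add_idem]
      _ ≤ v * a * d ^ (k + 1) + v * g ^ (k + 1) := by gcongr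

theorem mul_mul_pow_succ_le {v d : R} (h : a * (d * (v * a)) ≤ a * a) (k : ℕ) :
    (v * a * d) ^ (k + 1) ≤ v * a ^ (k + 1) * d := by
  induction k with
  | zero => simp
  | succ k ih =>
    calc (v * a * d) ^ (k + 1 + 1) ≤ v * a ^ (k + 1) * d * (v * a * d) := by
          rw [pow_succ]
          exact mul_le_mul_left ih _
      _ = v * a ^ k * (a * (d * (v * a))) * d := by simp only [pow_succ, mul_assoc]
      _ ≤ v * a ^ k * (a * a) * d := by gcongr
      _ = v * a ^ (k + 1 + 1) * d := by simp only [pow_succ, mul_assoc]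

theorem isNilpotent_add_of_mul_mul_le (ha : IsNilpotent a) (hg : IsNilpotent g)
    (hvva : (a + g) * ((a + g) * a) ≤ (a + g) * a) (hava : a * ((a + g) * a) ≤ a * a) :
    IsNilpotent (a + g) := by
  -- A word of length `m + 1` in `a` and `g` contains an `a` after its first letter unless it
  -- ends in `g ^ m = 0`, and the letters between two such `a`s are absorbed.
  obtain ⟨n, hn⟩ := ha
  obtain ⟨m, hm⟩ := hg
  set v := a + g
  set d := (1 + v) ^ m
  have v_pow_le : v ^ (m + 1) ≤ v * a * d := by
    simpa only [hm, mul_zero, add_zero] using add_pow_succ_le hvva m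
  have a_d_v_a : a * (d * (v * a)) ≤ a * a :=
    (mul_le_mul_right (one_add_pow_mul_le hvva m) a).trans hava
  refine ⟨(m + 1) * (n + 1), nonpos_iff_eq_zero.mp ?_⟩
  calc v ^ ((m + 1) * (n + 1)) = (v ^ (m + 1)) ^ (n + 1) := pow_mul ..
    _ ≤ (v * a * d) ^ (n + 1) := pow_le_pow_left' v_pow_le _
    _ ≤ v * a ^ (n + 1) * d := mul_mul_pow_succ_le a_d_v_a n
    _ = 0 := by rw [pow_succ, hn, zero_mul, mul_zero, zero_mul]

end IdemSemiring

theorem exists_mem_ne_zero_forall_smul_eq_zero {R A M : Type*} [CommSemiring R] [Semiring A]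
    [Algebra R A] [AddCommMonoid M] [Module A M] {N : Submodule R A} (hN : IsNilpotent N)
    {W : Set M} (hW : ∃ x ∈ W, x ≠ 0) (hNW : ∀ T ∈ N, ∀ x ∈ W, T • x ∈ W) :
    ∃ x ∈ W, x ≠ 0 ∧ ∀ T ∈ N, T • x = 0 := by
  by_contra! h
  have exists_pow (k : ℕ) : ∃ T ∈ N ^ k, ∃ x, T • x ∈ W ∧ T • x ≠ 0 := by
    induction k with
    | zero =>
      obtain ⟨x, hxW, hx⟩ := hW
      exact ⟨1, by rw [pow_zero]; exact Submodule.one_le.mp le_rfl, x, by simpa using ⟨hxW, hx⟩⟩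
    | succ k ih =>
      obtain ⟨T, hT, x, hxW, hx⟩ := ih
      obtain ⟨T', hT', hne⟩ := h _ hxW hx
      exact ⟨T' * T, pow_succ' N k ▸ Submodule.mul_mem_mul hT' hT, x,
        by simpa only [mul_smul] using ⟨hNW T' hT' _ hxW, hne⟩⟩
  obtain ⟨n, hn⟩ := hN
  obtain ⟨T, hT, x, -, hx⟩ := exists_pow n
  rw [hn, Submodule.zero_eq_bot, Submodule.mem_bot] at hT
  exact hx (by rw [hT, zero_smul])

theorem eq_bot_of_le_smul_of_isNilpotent {R A M : Type*} [CommSemiring R] [Semiring A]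
    [Algebra R A] [AddCommMonoid M] [Module R M] [Module A M] [IsScalarTower R A M]
    {N : Submodule R A} (hN : IsNilpotent N) {W : Submodule R M} (hW : W ≤ N • W) : W = ⊥ := by
  have le_pow_smul (k : ℕ) : W ≤ N ^ k • W := by
    induction k with
    | zero => rw [pow_zero, Submodule.one_smul]
    | succ k ih =>
      calc W ≤ N ^ k • W := ih
        _ ≤ N ^ k • N • W := Submodule.smul_mono le_rfl hW
        _ = N ^ (k + 1) • W := by rw [← Submodule.smul_assoc, smul_eq_mul, pow_succ]
  obtain ⟨n, hn⟩ := hN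
  rw [← le_bot_iff, ← Submodule.bot_smul (R := R) (A := A) (N := W), ← Submodule.zero_eq_bot, ← hn]
  exact le_pow_smul n

section TwistedCommutator

open Polynomial

theorem coeff_iterate_divX {R : Type*} [Semiring R] (p : R[X]) (n k : ℕ) :
    (divX^[n] p).coeff k = p.coeff (k + n) := by
  induction n generalizing p with
  | zero => rfl
  | succ n ih => rw [Function.iterate_succ_apply, ih, coeff_divX, add_assoc, add_comm n]

theorem iterate_divX_natDegree {R : Type*} [Semiring R] (p : R[X]) :
    divX^[p.natDegree] p = C p.leadingCoeff := by
  ext k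
  rw [coeff_iterate_divX, coeff_C]
  split_ifs with hk
  · rw [hk, zero_add, leadingCoeff]
  · exact coeff_eq_zero_of_natDegree_lt (by lia)

theorem isNilpotent_of_twisted_commutator {K A : Type*} [Field K] [Ring A] [Algebra K A]
    {l s : A} {e : K} (he : e ≠ 0) (hs : IsUnit s) (hsl : SemiconjBy s l (e • l))
    {Φ : K[X] → A} (hC : ∀ c, Φ (C c) = algebraMap K A c)
    (hΦ : ∀ p, Φ p * l = l * Φ p + l * Φ (divX p) * l * s)
    {p : K[X]} (hp : p ≠ 0) (h0 : Φ p = 0) : IsNilpotent l := by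
  have hsl_pow (n : ℕ) : s * l ^ n = e ^ n • (l ^ n * s) := by
    simpa only [_root_.smul_pow, smul_mul_assoc] using (hsl.pow_right n).eq
  -- Passing from `n` to `n + 1` removes the lowest coefficient of the polynomial.
  have sandwich (n : ℕ) : l ^ n * Φ (divX^[n] p) * l ^ n = 0 := by
    induction n with
    | zero => simpa using h0
    | succ n ih =>
      rw [Function.iterate_succ_apply']
      set q := divX^[n] p
      have key : e ^ n • (l ^ (n + 1) * Φ (divX q) * l ^ (n + 1) * s) = 0 :=
        calc e ^ n • (l ^ (n + 1) * Φ (divX q) * l ^ (n + 1) * s)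
            = l ^ n * (l * Φ (divX q) * l * s) * l ^ n := by
              nth_rw 1 [pow_succ]
              rw [pow_succ']
              simp only [mul_assoc, hsl_pow, mul_smul_comm]
          _ = l ^ n * Φ q * l ^ n * l - l * (l ^ n * Φ q * l ^ n) := by
              rw [← sub_eq_iff_eq_add'.mpr (hΦ q)]
              simp only [mul_sub, sub_mul, mul_assoc, (Commute.self_pow l n).eq,
                (Commute.self_pow l n).left_comm]
          _ = 0 := by rw [ih, zero_mul, mul_zero, sub_zero]
      exact hs.mul_left_eq_zero.mp ((smul_eq_zero.mp key).resolve_left (pow_ne_zero n he))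
  have h := sandwich p.natDegree
  rw [iterate_divX_natDegree, hC, ← Algebra.commutes, mul_assoc, ← pow_add, ← Algebra.smul_def] at h
  exact ⟨_, (smul_eq_zero.mp h).resolve_left (leadingCoeff_ne_zero.mpr hp)⟩

end TwistedCommutator

namespace ZinbielSuper

section Twist

variable (S : ZinbielSuper K Z)

/-- The set of homogeneous elements. -/
def homogeneous : Set Z := S.Z0 ∪ S.Z1

theorem span_homogeneous : span K S.homogeneous = ⊤ := by
  rw [homogeneous, span_union, span_eq, span_eq, S.compl.sup_eq_top]

theorem homogeneous_induction {p : Z → Prop} (x : Z) (hom : ∀ x ∈ S.homogeneous, p x)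
    (add : ∀ x y, p x → p y → p (x + y)) : p x := by
  obtain ⟨x₀, h₀, x₁, h₁, rfl⟩ :=
    mem_sup.mp (S.compl.sup_eq_top ▸ mem_top : x ∈ S.Z0 ⊔ S.Z1)
  exact add _ _ (hom _ (.inl h₀)) (hom _ (.inr h₁))

/-- The parity automorphism, acting as `(-1)^i` on the component `Zᵢ`. -/
noncomputable def parity : End K Z :=
  LinearMap.ofIsCompl S.compl S.Z0.subtype (-S.Z1.subtype)

variable {S} {x y z : Z} {τ υ : End K Z}

theorem parity_of_mem_Z0 (hx : x ∈ S.Z0) : S.parity x = x :=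
  LinearMap.ofIsCompl_apply_left S.compl (⟨x, hx⟩ : S.Z0)

theorem parity_of_mem_Z1 (hx : x ∈ S.Z1) : S.parity x = -x :=
  LinearMap.ofIsCompl_apply_right S.compl (⟨x, hx⟩ : S.Z1)

variable (S) in
theorem parity_parity (x : Z) : S.parity (S.parity x) = x := by
  induction x using S.homogeneous_induction with
  | hom x hx =>
    rcases hx with hx | hx
    · rw [parity_of_mem_Z0 hx, parity_of_mem_Z0 hx]
    · rw [parity_of_mem_Z1 hx, map_neg, parity_of_mem_Z1 hx, neg_neg]
  | add x y hx hy => rw [map_add, map_add, hx, hy]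

variable (S) in
theorem parity_mul (x y : Z) : S.parity (S.mul x y) = S.mul (S.parity x) (S.parity y) := by
  induction x using S.homogeneous_induction with
  | add x x' hx hx' => simp only [map_add, LinearMap.add_apply, hx, hx']
  | hom x hx =>
    induction y using S.homogeneous_induction with
    | add y y' hy hy' => simp only [map_add, hy, hy']
    | hom y hy =>
      rcases hx with hx | hx <;> rcases hy with hy | hy
      · rw [parity_of_mem_Z0 (S.mul00 x hx y hy), parity_of_mem_Z0 hx, parity_of_mem_Z0 hy]
      · rw [parity_of_mem_Z1 (S.mul01 x hx y hy), parity_of_mem_Z0 hx, parity_of_mem_Z1 hy, map_neg]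
      · rw [parity_of_mem_Z1 (S.mul10 x hx y hy), parity_of_mem_Z1 hx, parity_of_mem_Z0 hy,
          map_neg, LinearMap.neg_apply]
      · rw [parity_of_mem_Z0 (S.mul11 x hx y hy), parity_of_mem_Z1 hx, parity_of_mem_Z1 hy,
          map_neg, map_neg, LinearMap.neg_apply, neg_neg]

variable (S) in
/-- `S.HasTwist y τ` says that `y` is homogeneous and that `τ` is the power `|y|` of the parity
automorphism, so that `τ x = (-1)^(|x||y|) • x` for homogeneous `x`. Expressing signs through `τ`
makes the identities below linear in all variables but `y`. -/
inductive HasTwist : Z → End K Z → Prop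
  | even {y : Z} (hy : y ∈ S.Z0) : HasTwist y 1
  | odd {y : Z} (hy : y ∈ S.Z1) : HasTwist y S.parity

theorem exists_hasTwist (hy : y ∈ S.homogeneous) : ∃ τ, S.HasTwist y τ :=
  hy.elim (fun hy ↦ ⟨_, .even hy⟩) (fun hy ↦ ⟨_, .odd hy⟩)

namespace HasTwist

theorem mem_homogeneous (hy : S.HasTwist y τ) : y ∈ S.homogeneous := by
  rcases hy with hy | hy
  exacts [.inl hy, .inr hy]

theorem apply_apply (hy : S.HasTwist y τ) (x : Z) : τ (τ x) = x := by
  rcases hy with - | -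
  exacts [rfl, S.parity_parity x]

theorem apply_mul (hy : S.HasTwist y τ) (a b : Z) : τ (S.mul a b) = S.mul (τ a) (τ b) := by
  rcases hy with - | -
  exacts [rfl, S.parity_mul a b]

theorem mul (hx : S.HasTwist x τ) (hy : S.HasTwist y υ) : S.HasTwist (S.mul x y) (υ * τ) := by
  have parity_sq : S.parity * S.parity = 1 := LinearMap.ext S.parity_parity
  rcases hx with hx | hx <;> rcases hy with hy | hy
  · exact .even (S.mul00 x hx y hy)
  · exact .odd (S.mul01 x hx y hy)
  · exact .odd (S.mul10 x hx y hy)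
  · exact parity_sq ▸ .even (S.mul11 x hx y hy)

theorem exists_apply_eq_smul (hy : S.HasTwist y τ) (hz : z ∈ S.homogeneous) :
    ∃ e : K, e * e = 1 ∧ τ z = e • z := by
  rcases hy with - | -
  · exact ⟨1, one_mul 1, (one_smul K z).symm⟩
  · rcases hz with hz | hz
    · exact ⟨1, one_mul 1, by rw [parity_of_mem_Z0 hz, one_smul]⟩
    · exact ⟨-1, by rw [neg_mul_neg, one_mul], by rw [parity_of_mem_Z1 hz, neg_one_smul]⟩

theorem mul_mul_right (hy : S.HasTwist y τ) (a b : Z) :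
    S.mul (S.mul a b) y = S.mul a (S.mul b y + S.mul y (τ b)) := by
  induction a using S.homogeneous_induction with
  | add a a' ha ha' => simp only [map_add, LinearMap.add_apply, ha, ha']; abel
  | hom a ha =>
    induction b using S.homogeneous_induction with
    | add b b' hb hb' => simp only [map_add, LinearMap.add_apply, hb, hb']; abel
    | hom b hb =>
      rcases hy with hy | hy
      · exact S.zinb_even a b y ha hb (.inl hy) (.inr hy)
      · rcases hb with hb | hb
        · rw [parity_of_mem_Z0 hb]
          exact S.zinb_even a b y ha (.inl hb) (.inr hy) (.inl hb)
        · rw [parity_of_mem_Z1 hb, map_neg, ← sub_eq_add_neg]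
          exact S.zinb_odd a b y ha hb hy

theorem mul_mul_middle (hy : S.HasTwist y τ) (a b : Z) :
    S.mul (S.mul a y) b = S.mul a (S.mul y b + S.mul (τ b) y) := by
  induction b using S.homogeneous_induction with
  | add b b' hb hb' => simp only [map_add, LinearMap.add_apply, hb, hb']; abel
  | hom b hb =>
    obtain ⟨υ, hbυ⟩ := exists_hasTwist hb
    rw [hbυ.mul_mul_right]
    congr 2
    rcases hy with hy | hy <;> rcases hbυ with hb | hb
    · rfl
    · rw [parity_of_mem_Z0 hy]; rfl
    · rw [parity_of_mem_Z0 hb]; rfl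
    · rw [parity_of_mem_Z1 hy, parity_of_mem_Z1 hb, map_neg, map_neg, LinearMap.neg_apply]

theorem mul_mul_comm (hy : S.HasTwist y τ) (a b : Z) :
    S.mul (S.mul a b) y = S.mul (S.mul a y) (τ b) := by
  rw [hy.mul_mul_right, hy.mul_mul_middle, hy.apply_apply, add_comm]

theorem mul_mul_mul (hy : S.HasTwist y τ) (a b c : Z) :
    S.mul (S.mul a y) (S.mul b c) =
      S.mul a (S.mul y (S.mul b c)) + S.mul a (S.mul (S.mul (τ b) y) c) := by
  rw [hy.mul_mul_middle, map_add, hy.apply_mul, hy.mul_mul_comm, hy.apply_apply]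

end HasTwist

end Twist

section Nilpotent

variable (S : ZinbielSuper K Z)

/-- Left multiplication `y ↦ (x ↦ y·x)`, with values in the algebra of endomorphisms. -/
def lmul : Z →ₗ[K] End K Z := S.mul

/-- Right multiplication `y ↦ (x ↦ x·y)`, with values in the algebra of endomorphisms. -/
def rmul : Z →ₗ[K] End K Z := S.mul.flip

@[simp]
theorem lmul_apply (x y : Z) : S.lmul x y = S.mul x y := rfl

@[simp]
theorem rmul_apply (x y : Z) : S.rmul x y = S.mul y x := rfl

variable {S} {y : Z} {τ : End K Z}

namespace HasTwist

theorem rmul_mul_lmul (hy : S.HasTwist y τ) :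
    S.rmul y * S.lmul y = S.lmul y * S.rmul y + S.lmul y * S.lmul y * τ := by
  ext a
  simp [hy.mul_mul_right]

theorem rmul_lmul_mul_lmul (hy : S.HasTwist y τ) (u : Z) :
    S.rmul (S.lmul y u) * S.lmul y =
      S.lmul y * S.rmul (S.lmul y u) + S.lmul y * S.rmul u * S.lmul y * τ := by
  induction u using S.homogeneous_induction with
  | add u u' hu hu' => simp only [map_add, add_mul, mul_add, hu, hu']; abel
  | hom u hu =>
    obtain ⟨υ, hu⟩ := exists_hasTwist hu
    ext a
    simp [(hy.mul hu).mul_mul_right y, hu.mul_mul_comm y]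

open Polynomial in
theorem isNilpotent_lmul [FiniteDimensional K Z] (hy : S.HasTwist y τ) :
    IsNilpotent (S.lmul y) := by
  set l := S.lmul y
  obtain ⟨e, he, hτy⟩ := hy.exists_apply_eq_smul hy.mem_homogeneous
  have rmul_mul : S.rmul y * l = l * S.rmul y + l * l * τ := hy.rmul_mul_lmul
  have rmul_l_mul (u : Z) : S.rmul (l u) * l = l * S.rmul (l u) + l * S.rmul u * l * τ :=
    hy.rmul_lmul_mul_lmul u
  have τ_unit : IsUnit τ := IsUnit.of_mul_eq_one τ (LinearMap.ext hy.apply_apply)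
  have τ_semiconj : SemiconjBy τ l (e • l) := LinearMap.ext fun x ↦ by
    simp [l, hy.apply_mul, hτy]
  -- `Φ` sends `X ^ (k + 1)` to `R(l^k y)`, which behaves like a power of `l` under commutators.
  let Φ (p : K[X]) : End K Z := algebraMap K _ (p.coeff 0) + S.rmul (aeval l (divX p) y)
  have Φ_C (c : K) : Φ (C c) = algebraMap K _ c := by simp [Φ]
  have Φ_mul (p : K[X]) : Φ p * l = l * Φ p + l * Φ (divX p) * l * τ := by
    have aeval_divX : aeval l (divX p) y =
        l (aeval l (divX (divX p)) y) + (divX p).coeff 0 • y := by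
      conv_lhs => rw [← X_mul_divX_add (divX p)]
      simp [Algebra.algebraMap_eq_smul_one]
    simp only [Φ, aeval_divX, map_add, map_smul, add_mul, mul_add, smul_mul_assoc, mul_smul_comm,
      rmul_mul, rmul_l_mul, Algebra.algebraMap_eq_smul_one, one_mul, mul_one, smul_add]
    abel
  have Φ_charpoly : Φ (X * l.charpoly) = 0 := by
    have divX_X_mul : divX (X * l.charpoly) = l.charpoly := by ext; simp
    simp [Φ, divX_X_mul, LinearMap.aeval_self_charpoly]
  exact isNilpotent_of_twisted_commutator (left_ne_zero_of_mul_eq_one he) τ_unit τ_semiconj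
    Φ_C Φ_mul (mul_ne_zero X_ne_zero l.charpoly_monic.ne_zero) Φ_charpoly

theorem exists_apply_lmul_pow_eq_smul (hy : S.HasTwist y τ) (k : ℕ) :
    ∃ c : K, τ ((S.lmul y ^ k) y) = c • (S.lmul y ^ k) y := by
  obtain ⟨e, -, he⟩ := hy.exists_apply_eq_smul hy.mem_homogeneous
  induction k with
  | zero => exact ⟨e, he⟩
  | succ k ih =>
    obtain ⟨c, hc⟩ := ih
    exact ⟨c * e, by simp [pow_succ', hy.apply_mul, he, hc, smul_smul]⟩

theorem exists_lmul_pow_mul_add_eq_smul (hy : S.HasTwist y τ) (k : ℕ) :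
    ∃ c : K, S.mul ((S.lmul y ^ k) y) y + S.mul y (τ ((S.lmul y ^ k) y)) =
      c • (S.lmul y ^ (k + 1)) y := by
  induction k with
  | zero =>
    obtain ⟨e, -, he⟩ := hy.exists_apply_eq_smul hy.mem_homogeneous
    exact ⟨1 + e, by simp [he, add_smul]⟩
  | succ k ih =>
    obtain ⟨c, hc⟩ := hy.exists_apply_lmul_pow_eq_smul (k + 1)
    obtain ⟨d, hd⟩ := ih
    refine ⟨d + c, ?_⟩
    rw [hc, pow_succ' _ k, End.mul_apply, lmul_apply, hy.mul_mul_right, hd]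
    simp [pow_succ', add_smul]

theorem exists_rmul_pow_succ_eq_smul (hy : S.HasTwist y τ) (k : ℕ) :
    ∃ c : K, S.rmul y ^ (k + 1) = c • S.rmul ((S.lmul y ^ k) y) := by
  induction k with
  | zero => exact ⟨1, by simp⟩
  | succ k ih =>
    obtain ⟨c, hc⟩ := ih
    obtain ⟨d, hd⟩ := hy.exists_lmul_pow_mul_add_eq_smul k
    refine ⟨c * d, LinearMap.ext fun x ↦ ?_⟩
    simp [pow_succ' _ (k + 1), hc, hy.mul_mul_right, hd, smul_smul]

theorem isNilpotent_rmul [FiniteDimensional K Z] (hy : S.HasTwist y τ) :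
    IsNilpotent (S.rmul y) := by
  obtain ⟨n, hn⟩ := hy.isNilpotent_lmul
  obtain ⟨c, hc⟩ := hy.exists_rmul_pow_succ_eq_smul n
  exact ⟨n + 1, by rw [hc, hn, LinearMap.zero_apply, map_zero, smul_zero]⟩

end HasTwist

end Nilpotent

section Graded

variable (S : ZinbielSuper K Z)

/-- A subspace is graded if it is spanned by homogeneous elements. -/
def IsGraded (V : Submodule K Z) : Prop := ∃ s ⊆ S.homogeneous, span K s = V

theorem isGraded_bot : S.IsGraded ⊥ := ⟨∅, Set.empty_subset _, span_empty⟩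

theorem isGraded_top : S.IsGraded ⊤ := ⟨S.homogeneous, subset_rfl, S.span_homogeneous⟩

variable {S} {A B V W : Submodule K Z} {y : Z}

theorem isGraded_span_singleton (hy : y ∈ S.homogeneous) : S.IsGraded (span K {y}) :=
  ⟨{y}, Set.singleton_subset_iff.mpr hy, rfl⟩

namespace IsGraded

theorem sup (hA : S.IsGraded A) (hB : S.IsGraded B) : S.IsGraded (A ⊔ B) := by
  obtain ⟨s, hs, rfl⟩ := hA
  obtain ⟨t, ht, rfl⟩ := hB
  exact ⟨s ∪ t, Set.union_subset hs ht, span_union s t⟩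

theorem map₂_mul (hA : S.IsGraded A) (hB : S.IsGraded B) : S.IsGraded (map₂ S.mul A B) := by
  obtain ⟨s, hs, rfl⟩ := hA
  obtain ⟨t, ht, rfl⟩ := hB
  refine ⟨_, ?_, (map₂_span_span K S.mul s t).symm⟩
  rintro _ ⟨a, ha, b, hb, rfl⟩
  obtain ⟨τ, ha⟩ := exists_hasTwist (hs ha)
  obtain ⟨υ, hb⟩ := exists_hasTwist (ht hb)
  exact (ha.mul hb).mem_homogeneous

theorem induction_of_le [FiniteDimensional K Z] {p : Submodule K Z → Prop} (hV : S.IsGraded V)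
    (hW : S.IsGraded W) (hWV : W ≤ V) (base : p W)
    (sup_span : ∀ H, S.IsGraded H → W ≤ H → ∀ y ∈ S.homogeneous, H ⊔ span K {y} ≤ V →
      p H → p (H ⊔ span K {y})) : p V := by
  classical
  obtain ⟨s, hs, rfl⟩ := hV
  obtain ⟨t, hts, ht⟩ :=
    (fg_span_iff_fg_span_finset_subset s).mp (IsNoetherian.noetherian (span K s))
  have sup_span_finset (u : Finset Z) (hu : (u : Set Z) ⊆ s) : p (W ⊔ span K u) := by
    induction u using Finset.induction_on with
    | empty => simpa using base
    | insert y u _ ih =>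
      rw [Finset.coe_insert, Set.insert_subset_iff] at hu
      have hH : S.IsGraded (W ⊔ span K u) := hW.sup ⟨u, hu.2.trans hs, rfl⟩
      rw [Finset.coe_insert, span_insert, sup_comm (span K {y}), ← sup_assoc]
      refine sup_span _ hH le_sup_left y (hs hu.1) ?_ (ih hu.2)
      exact sup_le (sup_le hWV (span_mono hu.2)) (span_mono (Set.singleton_subset_iff.mpr hu.1))
  simpa only [← ht, sup_eq_right.mpr hWV] using sup_span_finset t hts

theorem map_rmul_mul_le (hA : S.IsGraded A) (hB : S.IsGraded B) :
    A.map S.rmul * B.map S.rmul ≤ B.map S.rmul * A.map S.rmul := by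
  obtain ⟨s, hs, rfl⟩ := hA
  obtain ⟨t, ht, rfl⟩ := hB
  rw [map_span, map_span, span_mul_span, span_mul_span, span_le]
  rintro _ ⟨_, ⟨a, ha, rfl⟩, _, ⟨b, hb, rfl⟩, rfl⟩
  obtain ⟨τ, haτ⟩ := exists_hasTwist (hs ha)
  obtain ⟨e, -, he⟩ := haτ.exists_apply_eq_smul (ht hb)
  have supercommute : S.rmul a * S.rmul b = e • (S.rmul b * S.rmul a) := by
    ext x
    simp [haτ.mul_mul_comm x b, he]
  change S.rmul a * S.rmul b ∈ _
  rw [supercommute]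
  exact smul_mem _ _ (subset_span (Set.mul_mem_mul ⟨b, hb, rfl⟩ ⟨a, ha, rfl⟩))

theorem isNilpotent_map_rmul [FiniteDimensional K Z] (hV : S.IsGraded V) :
    IsNilpotent (V.map S.rmul) := by
  refine hV.induction_of_le (p := fun V ↦ IsNilpotent (V.map S.rmul)) S.isGraded_bot bot_le
    (by simp only [Submodule.map_bot]; exact .zero) ?_
  intro H hH _ y hy _ ih
  have hy' := isGraded_span_singleton hy
  obtain ⟨τ, hτ⟩ := exists_hasTwist hy
  have span_y : IsNilpotent ((span K {y}).map S.rmul) := by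
    obtain ⟨n, hn⟩ := hτ.isNilpotent_rmul
    exact ⟨n, by simp [map_span, span_pow, hn]⟩
  rw [Submodule.map_sup, ← Submodule.add_eq_sup]
  have commute : Commute (H.map S.rmul) ((span K {y}).map S.rmul) :=
    (hH.map_rmul_mul_le hy').antisymm (hy'.map_rmul_mul_le hH)
  exact commute.isNilpotent_add ih span_y

end IsGraded

theorem eq_bot_of_le_map₂ [FiniteDimensional K Z] (hV : V ≤ map₂ S.mul V V) : V = ⊥ := by
  refine eq_bot_of_le_smul_of_isNilpotent S.isGraded_top.isNilpotent_map_rmul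
    (hV.trans (map₂_le.mpr fun a ha b _ ↦ ?_))
  change S.rmul b • a ∈ _
  exact Submodule.smul_mem_smul (mem_map_of_mem mem_top) ha

namespace IsGraded

open scoped Pointwise in
theorem map_lmul_mul_mul_le (A : Submodule K Z) {Y B : Submodule K Z} (hY : S.IsGraded Y)
    (hB : S.IsGraded B) :
    A.map S.lmul * (Y.map S.lmul * B.map S.lmul) ≤
      (map₂ S.mul A Y).map S.lmul * B.map S.lmul + A.map S.lmul * (map₂ S.mul B Y).map S.lmul := by
  obtain ⟨t, ht, rfl⟩ := hY
  obtain ⟨s, hs, rfl⟩ := hB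
  have span_products : A.map S.lmul * ((span K t).map S.lmul * (span K s).map S.lmul) =
      span K ((S.lmul '' A) * (S.lmul '' t * S.lmul '' s)) := by
    rw [← span_eq (A.map S.lmul), map_span, map_span, span_mul_span, span_mul_span, map_coe]
  rw [span_products, span_le]
  rintro _ ⟨_, ⟨a, ha, rfl⟩, _, ⟨_, ⟨y, hy, rfl⟩, _, ⟨b, hb, rfl⟩, rfl⟩, rfl⟩
  obtain ⟨τ, hyτ⟩ := exists_hasTwist (ht hy)
  obtain ⟨e, -, he⟩ := hyτ.exists_apply_eq_smul (hs hb)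
  have lmul_mul_lmul_mul_lmul : S.lmul a * (S.lmul y * S.lmul b) =
      S.lmul (S.mul a y) * S.lmul b + S.lmul a * S.lmul (-e • S.mul b y) := by
    ext x
    simp [hyτ.mul_mul_mul, he]
  change S.lmul a * (S.lmul y * S.lmul b) ∈ _
  rw [lmul_mul_lmul_mul_lmul]
  have hy := subset_span (R := K) hy
  have hb := subset_span (R := K) hb
  exact add_mem_sup
    (mul_mem_mul (mem_map_of_mem (apply_mem_map₂ _ ha hy)) (mem_map_of_mem hb))
    (mul_mem_mul (mem_map_of_mem ha) (mem_map_of_mem (smul_mem _ _ (apply_mem_map₂ _ hb hy))))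

theorem isNilpotent_map_lmul_sup_span [FiniteDimensional K Z] {H : Submodule K Z}
    (hH : S.IsGraded H) (hy : y ∈ S.homogeneous)
    (hmul : map₂ S.mul (H ⊔ span K {y}) (H ⊔ span K {y}) ≤ H) (hnil : IsNilpotent (H.map S.lmul)) :
    IsNilpotent ((H ⊔ span K {y}).map S.lmul) := by
  obtain ⟨τ, hτ⟩ := exists_hasTwist hy
  have span_y : IsNilpotent ((span K {y}).map S.lmul) := by
    obtain ⟨n, hn⟩ := hτ.isNilpotent_lmul
    exact ⟨n, by simp [map_span, span_pow, hn]⟩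
  have hV := hH.sup (isGraded_span_singleton hy)
  set V := H ⊔ span K {y}
  have hHV : H ≤ V := le_sup_left
  have V_eq : V.map S.lmul = H.map S.lmul + (span K {y}).map S.lmul := Submodule.map_sup ..
  have mul_mul_le (A : Submodule K Z) (hA : A ≤ V) :
      A.map S.lmul * (V.map S.lmul * H.map S.lmul) ≤
        H.map S.lmul * H.map S.lmul + A.map S.lmul * H.map S.lmul := by
    refine (map_lmul_mul_mul_le A hV hH).trans (add_le_add ?_ ?_)
    · exact mul_le_mul_left (map_mono ((map₂_le_map₂ hA le_rfl).trans hmul)) _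
    · exact mul_le_mul_right (map_mono ((map₂_le_map₂ hHV le_rfl).trans hmul)) _
  rw [V_eq]
  refine isNilpotent_add_of_mul_mul_le hnil span_y ?_ ?_ <;> rw [← V_eq]
  · exact (mul_mul_le V le_rfl).trans (add_le (mul_le_mul_left (map_mono hHV) _) le_rfl)
  · exact (mul_mul_le H hHV).trans (add_le le_rfl le_rfl)

theorem isNilpotent_map_lmul_of_map₂ [FiniteDimensional K Z] (hV : S.IsGraded V)
    (hVV : map₂ S.mul V V ≤ V) (hnil : IsNilpotent ((map₂ S.mul V V).map S.lmul)) :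
    IsNilpotent (V.map S.lmul) := by
  refine hV.induction_of_le (p := fun V ↦ IsNilpotent (V.map S.lmul)) (hV.map₂_mul hV) hVV hnil ?_
  intro H hH hVVH y hy hHV ih
  exact hH.isNilpotent_map_lmul_sup_span hy ((map₂_le_map₂ hHV hHV).trans hVVH) ih

theorem isNilpotent_map_lmul [FiniteDimensional K Z] (hV : S.IsGraded V)
    (hVV : map₂ S.mul V V ≤ V) : IsNilpotent (V.map S.lmul) := by
  induction V using WellFoundedLT.induction with
  | ind V ih =>
    by_cases h : V ≤ map₂ S.mul V V
    · rw [eq_bot_of_le_map₂ h, Submodule.map_bot]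
      exact .zero
    · exact hV.isNilpotent_map_lmul_of_map₂ hVV
        (ih _ (lt_of_le_not_ge hVV h) (hV.map₂_mul hV) (map₂_le_map₂ hVV hVV))

end IsGraded

end Graded

section Minimal

variable (S : ZinbielSuper K Z)

theorem isRightIdeal_ker_rmul : IsRightIdeal S (LinearMap.ker S.rmul) := by
  intro a ha w
  have mul_a (x : Z) : S.mul x a = 0 := LinearMap.congr_fun (LinearMap.mem_ker.mp ha) x
  refine LinearMap.mem_ker.mpr (LinearMap.ext fun x ↦ ?_)
  induction w using S.homogeneous_induction with
  | add w w' hw hw' => simp_all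
  | hom w hw =>
    obtain ⟨τ, hw⟩ := exists_hasTwist hw
    have mul_τ_a : S.mul w (τ a) = 0 := by
      rw [← hw.apply_apply w, ← hw.apply_mul, mul_a, map_zero]
    simpa [mul_a, mul_τ_a] using (hw.mul_mul_right x a).symm

variable {S} {I : Submodule K Z}

theorem exists_mem_ne_zero_annihilated [FiniteDimensional K Z] (hI : IsIdeal S I) (h0 : I ≠ ⊥) :
    ∃ a ∈ I, a ≠ 0 ∧ ∀ x, S.mul x a = 0 ∧ S.mul a x = 0 := by
  obtain ⟨b, hbI, hb0, hb⟩ := exists_mem_ne_zero_forall_smul_eq_zero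
    (S.isGraded_top.isNilpotent_map_lmul le_top) (W := (I : Set Z)) (I.ne_bot_iff.mp h0) (by
      rintro _ ⟨x, -, rfl⟩ a ha
      exact (hI x a ha).1)
  have hb_ker : b ∈ LinearMap.ker S.rmul :=
    LinearMap.ext fun x ↦ hb _ (mem_map_of_mem mem_top)
  obtain ⟨a, ⟨haI, ha_ker⟩, ha0, ha⟩ := exists_mem_ne_zero_forall_smul_eq_zero
    S.isGraded_top.isNilpotent_map_rmul (W := (I ∩ LinearMap.ker S.rmul : Set Z))
    ⟨b, ⟨hbI, hb_ker⟩, hb0⟩ (by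
      rintro _ ⟨x, -, rfl⟩ a ⟨haI, ha_ker⟩
      exact ⟨(hI x a haI).2, S.isRightIdeal_ker_rmul a ha_ker x⟩)
  exact ⟨a, haI, ha0, fun x ↦ ⟨LinearMap.congr_fun (LinearMap.mem_ker.mp ha_ker) x,
    ha _ (mem_map_of_mem mem_top)⟩⟩

theorem isIdeal_span_singleton {a : Z} (ha : ∀ x, S.mul x a = 0 ∧ S.mul a x = 0) :
    IsIdeal S (span K {a}) := by
  intro x b hb
  obtain ⟨c, rfl⟩ := mem_span_singleton.mp hb
  simp [ha x]

theorem isAtom_of_isMinimalIdeal [FiniteDimensional K Z] (hI : IsMinimalIdeal S I) : IsAtom I := by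
  obtain ⟨hI, hI0, hmin⟩ := hI
  obtain ⟨a, haI, ha0, ha⟩ := exists_mem_ne_zero_annihilated hI hI0
  have hle : span K {a} ≤ I := (span_singleton_le_iff_mem a I).mpr haI
  have hne : span K {a} ≠ ⊥ := span_singleton_eq_bot.not.mpr ha0
  exact (hmin _ (isIdeal_span_singleton ha) hle).resolve_left hne ▸ nonzero_span_atom a ha0

end Minimal

end ZinbielSuper

theorem minimalIdeal_eq_minimalRightIdeal_general [FiniteDimensional K Z] (S : ZinbielSuper K Z)
    {I J : Submodule K Z} (hI : IsMinimalIdeal S I) (hJ : J ≠ ⊥) (hJI : J ≤ I) : I = J :=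
  (((ZinbielSuper.isAtom_of_isMinimalIdeal hI).le_iff.mp hJI).resolve_left hJ).symm

/-- If `I` is a minimal ideal of a finite-dimensional Zinbiel superalgebra and `J ⊆ I` is
a minimal right ideal, then `I = J`. -/
theorem minimalIdeal_eq_minimalRightIdeal (K : Type*) [Field K] (Z : Type*)
    [AddCommGroup Z] [Module K Z] [FiniteDimensional K Z] (S : ZinbielSuper K Z)
    (I J : Submodule K Z) (hI : IsMinimalIdeal S I) (hJ : IsMinimalRightIdeal S J)
    (hJI : J ≤ I) : I = J := by
  exact minimalIdeal_eq_minimalRightIdeal_general S hI hJ.2.1 hJI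
end

section
/- Every nonzero finite-dimensional Zinbiel superalgebra Z = Z₀ ⊕ Z₁ over a field has a minimal ideal which is graded; moreover, there exists a nonzero homogeneous element e ∈ Z₀ ∪ Z₁ lying in the annihilator of Z, i.e. with e·Z = Z·e = 0. -/
open Module Submodule

variable {K : Type*} [Field K] {Z : Type*} [AddCommGroup Z] [Module K Z]

/-!
For homogeneous `y` the right multiplications `R_y : x ↦ x·y` commute up to sign, and the Zinbiel
identity writes `R_z R_y` as another right multiplication. So the `R_u` with `u` even form an
algebra of operators; it contains no nonzero idempotent, which makes each `R_y` nilpotent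
(for odd `y` already `R_y² = 0`).

If `P` is minimal among the right ideals containing a nonzero homogeneous element, then `P·y` is a
right ideal in `P` and nilpotency of `R_y` excludes `P·y = P`; hence the homogeneous elements of `P`
are killed by right multiplication with `Z`. Among the homogeneous `n ≠ 0` with `n·Z = 0`, take one
with `ker R_n` maximal. If `Z·n ≠ 0`, the right ideal `Z·n` contains a competitor `x·n`, for which
`R_{x·n} = R_n R_x`; maximality gives `R_x⁻¹(ker R_n) = ker R_n`, against nilpotency of `R_x`.
So `n` lies in the annihilator, and the line `K n` is a minimal ideal.
-/

section Nilpotent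

theorem exists_isIdempotentElem_dvd_and_pow_mul_eq_pow {R : Type*} [CommRing R] [IsArtinianRing R]
    (a : R) : ∃ e, IsIdempotentElem e ∧ a ∣ e ∧ ∃ n, a ^ n * e = a ^ n := by
  obtain ⟨n, b, hb⟩ := IsArtinian.exists_pow_succ_smul_dvd a (1 : R)
  have pow_mul_eq (k : ℕ) : a ^ n * (a * b) ^ k = a ^ n := by
    induction k with
    | zero => rw [pow_zero, mul_one]
    | succ k ih =>
      rw [smul_eq_mul, smul_eq_mul, mul_one, Nat.succ_eq_add_one] at hb
      rw [pow_succ, ← mul_assoc, ih, ← mul_assoc, ← pow_succ, hb]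
  refine ⟨(a * b) ^ (n + 1), ?_, ?_, n, pow_mul_eq (n + 1)⟩
  · calc (a * b) ^ (n + 1) * (a * b) ^ (n + 1)
        = a ^ n * (a * b) ^ (n + 1) * (a * b ^ (n + 1)) := by ring
      _ = a ^ n * (a * b ^ (n + 1)) := by rw [pow_mul_eq]
      _ = (a * b) ^ (n + 1) := by ring
  · exact dvd_pow (dvd_mul_right a b) n.succ_ne_zero

theorem mul_mem_of_mem_adjoin {R A : Type*} [CommSemiring R] [Semiring A] [Algebra R A]
    {B : NonUnitalSubalgebra R A} {b c : A} (hb : b ∈ B) (hc : c ∈ Algebra.adjoin R (B : Set A)) :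
    b * c ∈ B := by
  induction hc using Algebra.adjoin_induction generalizing b with
  | mem c hc => exact B.mul_mem hb hc
  | algebraMap r =>
    rw [← Algebra.commutes, ← Algebra.smul_def]
    exact SMulMemClass.smul_mem r hb
  | add c d _ _ hc hd => exact mul_add b c d ▸ add_mem (hc hb) (hd hb)
  | mul c d _ _ hc hd => exact mul_assoc b c d ▸ hd (hc hb)

open scoped IsMulCommutative in
theorem isNilpotent_of_forall_isIdempotentElem_eq_zero {R A : Type*} [CommRing R]
    [IsArtinianRing R] [Ring A] [Algebra R A] [Algebra.IsIntegral R A] {B : NonUnitalSubalgebra R A}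
    (hB : ∀ e ∈ B, IsIdempotentElem e → e = 0) {a : A} (ha : a ∈ B) : IsNilpotent a := by
  have : Module.Finite R (Algebra.adjoin R {a}) :=
    Algebra.finite_adjoin_simple_of_isIntegral (Algebra.IsIntegral.isIntegral a)
  have : IsArtinianRing (Algebra.adjoin R {a}) := IsArtinianRing.of_finite R _
  obtain ⟨e, he, ⟨c, rfl⟩, n, hn⟩ := exists_isIdempotentElem_dvd_and_pow_mul_eq_pow
    (⟨a, Algebra.self_mem_adjoin_singleton R a⟩ : Algebra.adjoin R {a})
  have hac_mem : a * c ∈ B := mul_mem_of_mem_adjoin ha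
    (Algebra.adjoin_mono (Set.singleton_subset_iff.2 ha) c.2)
  have hac : a * c = 0 := hB _ hac_mem (congrArg Subtype.val he)
  refine ⟨n, ?_⟩
  calc a ^ n = a ^ n * (a * c) := (congrArg Subtype.val hn).symm
    _ = 0 := by rw [hac, mul_zero]

variable {R M : Type*} [Semiring R] [AddCommMonoid M] [Module R M]

theorem eq_bot_of_le_map_of_isNilpotent {f : End R M} (hf : IsNilpotent f) {P : Submodule R M}
    (hP : P ≤ P.map f) : P = ⊥ := by
  obtain ⟨k, hk⟩ := hf
  have le_map_pow (k : ℕ) : P ≤ P.map (f ^ k) := by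
    induction k with
    | zero => exact P.map_id.ge
    | succ k ih =>
      rw [pow_succ', End.mul_eq_comp, Submodule.map_comp]
      exact hP.trans (Submodule.map_mono ih)
  simpa only [hk, Submodule.map_zero, le_bot_iff] using le_map_pow k

theorem eq_top_of_comap_le_of_isNilpotent {f : End R M} (hf : IsNilpotent f) {P : Submodule R M}
    (hP : P.comap f ≤ P) : P = ⊤ := by
  obtain ⟨k, hk⟩ := hf
  have comap_pow_le (k : ℕ) : P.comap (f ^ k) ≤ P := by
    induction k with
    | zero => exact P.comap_id.le
    | succ k ih =>
      rw [pow_succ, End.mul_eq_comp, Submodule.comap_comp]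
      exact (Submodule.comap_mono ih).trans hP
  simpa only [hk, Submodule.comap_zero, top_le_iff] using comap_pow_le k

end Nilpotent

namespace ZinbielSuper

variable (S : ZinbielSuper K Z)

/-- An element of `Z₀ ∪ Z₁`; in particular `0` is homogeneous. -/
def IsHomogeneous (x : Z) : Prop := x ∈ S.Z0 ∨ x ∈ S.Z1

/-- The right multiplication `R_y : x ↦ x·y` as an endomorphism depending linearly on `y`; the
product `R_z * R_y` in `End K Z` multiplies by `y` first. -/
def mulRight : Z →ₗ[K] End K Z := S.mul.flip

variable {S}

@[simp]
theorem mulRight_apply (x y : Z) : S.mulRight y x = S.mul x y := rfl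

theorem IsHomogeneous.mul {x y : Z} (hx : S.IsHomogeneous x) (hy : S.IsHomogeneous y) :
    S.IsHomogeneous (S.mul x y) := by
  rcases hx with hx | hx <;> rcases hy with hy | hy
  · exact Or.inl (S.mul00 x hx y hy)
  · exact Or.inr (S.mul01 x hx y hy)
  · exact Or.inr (S.mul10 x hx y hy)
  · exact Or.inl (S.mul11 x hx y hy)

theorem exists_even_add_odd_eq (S : ZinbielSuper K Z) (x : Z) :
    ∃ a ∈ S.Z0, ∃ b ∈ S.Z1, a + b = x :=
  Submodule.mem_sup.1 (S.compl.sup_eq_top ▸ Submodule.mem_top)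

theorem mem_of_forall_isHomogeneous_mem (S : ZinbielSuper K Z) {P : Submodule K Z}
    (h : ∀ x, S.IsHomogeneous x → x ∈ P) (x : Z) : x ∈ P := by
  obtain ⟨a, ha, b, hb, rfl⟩ := S.exists_even_add_odd_eq x
  exact P.add_mem (h a (Or.inl ha)) (h b (Or.inr hb))

theorem linearMap_ext_of_isHomogeneous (S : ZinbielSuper K Z) {M : Type*} [AddCommMonoid M]
    [Module K M] {f g : Z →ₗ[K] M} (h : ∀ x, S.IsHomogeneous x → f x = g x) : f = g :=
  LinearMap.ext (S.mem_of_forall_isHomogeneous_mem (P := LinearMap.eqLocus f g) h)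

theorem exists_isHomogeneous_apply_ne_zero (S : ZinbielSuper K Z) {M : Type*} [AddCommMonoid M]
    [Module K M] {f : Z →ₗ[K] M} (hf : f ≠ 0) : ∃ x, S.IsHomogeneous x ∧ f x ≠ 0 := by
  contrapose! hf
  exact S.linearMap_ext_of_isHomogeneous hf

section Identities

variable {y z : Z}

theorem mulRight_mul_mulRight_of_even (hy : S.IsHomogeneous y) (hz : S.IsHomogeneous z)
    (h : y ∈ S.Z0 ∨ z ∈ S.Z0) :
    S.mulRight z * S.mulRight y = S.mulRight (S.mul y z + S.mul z y) :=
  S.linearMap_ext_of_isHomogeneous fun x hx => S.zinb_even x y z hx hy hz h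

theorem mulRight_mul_mulRight_of_odd (hy : y ∈ S.Z1) (hz : z ∈ S.Z1) :
    S.mulRight z * S.mulRight y = S.mulRight (S.mul y z - S.mul z y) :=
  S.linearMap_ext_of_isHomogeneous fun x hx => S.zinb_odd x y z hx hy hz

theorem IsHomogeneous.even_or_odd (hy : S.IsHomogeneous y) (hz : S.IsHomogeneous z) :
    (y ∈ S.Z0 ∨ z ∈ S.Z0) ∨ (y ∈ S.Z1 ∧ z ∈ S.Z1) := by
  unfold IsHomogeneous at hy hz
  tauto

theorem exists_mulRight_mul_mulRight_eq (hy : S.IsHomogeneous y) (hz : S.IsHomogeneous z) :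
    ∃ ε : K, S.mulRight z * S.mulRight y = S.mulRight (S.mul y z + ε • S.mul z y) := by
  rcases hy.even_or_odd hz with h | ⟨hy₁, hz₁⟩
  · exact ⟨1, by rw [mulRight_mul_mulRight_of_even hy hz h, one_smul]⟩
  · exact ⟨-1, by rw [mulRight_mul_mulRight_of_odd hy₁ hz₁, neg_one_smul, sub_eq_add_neg]⟩

theorem commute_mulRight_of_even (hy : y ∈ S.Z0) (hz : S.IsHomogeneous z) :
    Commute (S.mulRight y) (S.mulRight z) := by
  rw [Commute, SemiconjBy, mulRight_mul_mulRight_of_even hz (Or.inl hy) (Or.inr hy),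
    mulRight_mul_mulRight_of_even (Or.inl hy) hz (Or.inl hy), add_comm]

theorem exists_mul_right_comm (hy : S.IsHomogeneous y) (hz : S.IsHomogeneous z) :
    ∃ ε : K, ∀ x, S.mul (S.mul x y) z = ε • S.mul (S.mul x z) y := by
  suffices ∃ ε : K, S.mulRight z * S.mulRight y = ε • (S.mulRight y * S.mulRight z) from
    this.imp fun _ h => LinearMap.congr_fun h
  rcases hy.even_or_odd hz with h | ⟨hy₁, hz₁⟩
  · refine ⟨1, ?_⟩
    rw [one_smul, mulRight_mul_mulRight_of_even hy hz h,
      mulRight_mul_mulRight_of_even hz hy h.symm, add_comm]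
  · refine ⟨-1, ?_⟩
    rw [neg_one_smul, mulRight_mul_mulRight_of_odd hy₁ hz₁, mulRight_mul_mulRight_of_odd hz₁ hy₁,
      ← map_neg, neg_sub]

theorem mulRight_mul_eq_of_mul_eq_zero (hz : S.IsHomogeneous z) (hz₀ : S.mul z = 0) (x : Z) :
    S.mulRight (S.mul x z) = S.mulRight z * S.mulRight x := by
  have h : S.mulRight ∘ₗ S.mulRight z = LinearMap.mulLeft K (S.mulRight z) ∘ₗ S.mulRight := by
    refine S.linearMap_ext_of_isHomogeneous fun x hx => ?_
    obtain ⟨ε, hε⟩ := exists_mulRight_mul_mulRight_eq hx hz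
    simpa [hz₀] using hε.symm
  exact LinearMap.congr_fun h x

end Identities

section NilpotentMulRight

/-- The operators `R_u` with `u ∈ Z₀`, which form a subalgebra without unit of `End K Z`. -/
def evenMulRight (S : ZinbielSuper K Z) : NonUnitalSubalgebra K (End K Z) :=
  (S.Z0.map S.mulRight).toNonUnitalSubalgebra <| by
    rintro _ _ ⟨z, hz, rfl⟩ ⟨y, hy, rfl⟩
    exact ⟨_, S.Z0.add_mem (S.mul00 y hy z hz) (S.mul00 z hz y hy),
      (mulRight_mul_mulRight_of_even (Or.inl hy) (Or.inl hz) (Or.inl hy)).symm⟩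

-- Says that the product `x·y + y·x` has no nonzero idempotent on `Z₀`.
theorem eq_zero_of_mul_self_add_mul_self_eq {v : Z} (hv : v ∈ S.Z0)
    (h : S.mul v v + S.mul v v = v) : v = 0 := by
  have mul_mul_self : S.mul (S.mul v v) v = S.mul v v := by
    have := S.zinb_even v v v (Or.inl hv) (Or.inl hv) (Or.inl hv) (Or.inl hv)
    rwa [h] at this
  have : v = S.mul v v := by
    calc v = S.mul v v + S.mul v v := h.symm
      _ = S.mul (S.mul v v) v + S.mul (S.mul v v) v := by rw [mul_mul_self]
      _ = S.mul (S.mul v v + S.mul v v) v := by rw [map_add, LinearMap.add_apply]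
      _ = S.mul v v := by rw [h]
  rw [← this] at h
  exact add_eq_left.1 h

theorem eq_zero_of_isIdempotentElem_of_mem_evenMulRight {f : End K Z} (hf : f ∈ S.evenMulRight)
    (hidem : IsIdempotentElem f) : f = 0 := by
  obtain ⟨u, hu, rfl⟩ := hf
  have mulRight_eq : S.mulRight u = S.mulRight (S.mul u u + S.mul u u) :=
    hidem.eq.symm.trans (mulRight_mul_mulRight_of_even (Or.inl hu) (Or.inl hu) (Or.inl hu))
  have mul_self : S.mul (S.mul u u) u = S.mul u u := LinearMap.congr_fun hidem.eq u
  have : S.mul u u = 0 := by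
    refine eq_zero_of_mul_self_add_mul_self_eq (S.mul00 u hu u hu) ?_
    rw [← map_add, ← mulRight_apply, ← mulRight_eq, mulRight_apply, mul_self]
  rw [mulRight_eq, this, add_zero, map_zero]

variable [FiniteDimensional K Z]

theorem isNilpotent_mulRight (S : ZinbielSuper K Z) (x : Z) : IsNilpotent (S.mulRight x) := by
  obtain ⟨a, ha, b, hb, rfl⟩ := S.exists_even_add_odd_eq x
  have hnil_even : IsNilpotent (S.mulRight a) := isNilpotent_of_forall_isIdempotentElem_eq_zero
    (fun _ => eq_zero_of_isIdempotentElem_of_mem_evenMulRight) (Submodule.mem_map_of_mem ha)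
  have hnil_odd : IsNilpotent (S.mulRight b) :=
    ⟨2, by rw [pow_two, mulRight_mul_mulRight_of_odd hb hb, sub_self, map_zero]⟩
  rw [map_add]
  exact (commute_mulRight_of_even ha (Or.inr hb)).isNilpotent_add hnil_even hnil_odd

end NilpotentMulRight

section RightIdeals

theorem _root_.IsRightIdeal.map_mulRight {P : Submodule K Z} (hP : IsRightIdeal S P) {y : Z}
    (hy : S.IsHomogeneous y) : IsRightIdeal S (P.map (S.mulRight y)) := by
  rintro _ ⟨p, hp, rfl⟩
  refine S.mem_of_forall_isHomogeneous_mem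
    (P := (P.map (S.mulRight y)).comap (S.mul (S.mul p y))) fun z hz => ?_
  obtain ⟨ε, hε⟩ := exists_mul_right_comm hy hz
  rw [Submodule.mem_comap, hε]
  exact Submodule.smul_mem _ ε (Submodule.mem_map_of_mem (hP p hp z))

theorem isRightIdeal_ker_mulRight {y : Z} (hy : S.IsHomogeneous y) :
    IsRightIdeal S (LinearMap.ker (S.mulRight y)) := by
  intro x (hx : S.mul x y = 0)
  refine S.mem_of_forall_isHomogeneous_mem
    (P := (LinearMap.ker (S.mulRight y)).comap (S.mul x)) fun z hz => ?_
  obtain ⟨ε, hε⟩ := exists_mul_right_comm hz hy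
  rw [Submodule.mem_comap, LinearMap.mem_ker, mulRight_apply, hε, hx, map_zero,
    LinearMap.zero_apply, smul_zero]

variable [FiniteDimensional K Z]

theorem _root_.IsRightIdeal.exists_isHomogeneous_mul_eq_zero {P : Submodule K Z}
    (hP : IsRightIdeal S P) (hhom : ∃ v ∈ P, v ≠ 0 ∧ S.IsHomogeneous v) :
    ∃ e ∈ P, e ≠ 0 ∧ S.IsHomogeneous e ∧ S.mul e = 0 := by
  obtain ⟨Q, hQP, ⟨hQ, v, hvQ, hv₀, hv⟩, hmin⟩ := exists_minimal_le_of_wellFoundedLT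
    (fun Q => IsRightIdeal S Q ∧ ∃ v ∈ Q, v ≠ 0 ∧ S.IsHomogeneous v) P ⟨hP, hhom⟩
  refine ⟨v, hQP hvQ, hv₀, hv, S.linearMap_ext_of_isHomogeneous fun y hy => ?_⟩
  by_contra hvy
  have map_le : Q.map (S.mulRight y) ≤ Q := Submodule.map_le_iff_le_comap.2 fun q hq => hQ q hq y
  have le_map : Q ≤ Q.map (S.mulRight y) :=
    hmin ⟨hQ.map_mulRight hy, S.mul v y, Submodule.mem_map_of_mem hvQ, hvy, hv.mul hy⟩ map_le
  have hQ_bot : Q = ⊥ := eq_bot_of_le_map_of_isNilpotent (S.isNilpotent_mulRight y) le_map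
  exact hv₀ ((Submodule.mem_bot K).1 (hQ_bot ▸ hvQ))

end RightIdeals

section Annihilator

variable {e : Z}

theorem exists_isHomogeneous_mul_eq_zero_and_mulRight_eq_zero [FiniteDimensional K Z] [Nontrivial Z]
    (S : ZinbielSuper K Z) :
    ∃ e, e ≠ 0 ∧ S.IsHomogeneous e ∧ S.mul e = 0 ∧ S.mulRight e = 0 := by
  have top_isRightIdeal : IsRightIdeal S ⊤ := fun _ _ _ => Submodule.mem_top
  obtain ⟨v, hv, hv₀⟩ := S.exists_isHomogeneous_apply_ne_zero (one_ne_zero (α := End K Z))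
  obtain ⟨w, -, hw⟩ := top_isRightIdeal.exists_isHomogeneous_mul_eq_zero
    ⟨v, Submodule.mem_top, hv₀, hv⟩
  obtain ⟨n, ⟨hn₀, hn, hn_mul⟩, hmax⟩ := exists_maximalFor_of_wellFoundedGT
    (fun n => n ≠ 0 ∧ S.IsHomogeneous n ∧ S.mul n = 0)
    (fun n => LinearMap.ker (S.mulRight n)) ⟨w, hw⟩
  refine ⟨n, hn₀, hn, hn_mul, ?_⟩
  by_contra hne
  obtain ⟨y, hy, hyn⟩ := S.exists_isHomogeneous_apply_ne_zero hne
  obtain ⟨_, ⟨x, -, rfl⟩, hxn⟩ :=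
    (top_isRightIdeal.map_mulRight hn).exists_isHomogeneous_mul_eq_zero
      ⟨S.mul y n, Submodule.mem_map_of_mem Submodule.mem_top, hyn, hy.mul hn⟩
  have ker_mul : LinearMap.ker (S.mulRight (S.mul x n)) =
      (LinearMap.ker (S.mulRight n)).comap (S.mulRight x) := by
    rw [mulRight_mul_eq_of_mul_eq_zero hn hn_mul, End.mul_eq_comp, LinearMap.ker_comp]
  have ker_le_comap : LinearMap.ker (S.mulRight n) ≤
      (LinearMap.ker (S.mulRight n)).comap (S.mulRight x) :=
    fun z hz => isRightIdeal_ker_mulRight hn z hz x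
  have comap_le_ker : (LinearMap.ker (S.mulRight n)).comap (S.mulRight x) ≤
      LinearMap.ker (S.mulRight n) :=
    ker_mul.ge.trans (hmax hxn (ker_le_comap.trans ker_mul.ge))
  exact hne (LinearMap.ker_eq_top.1
    (eq_top_of_comap_le_of_isNilpotent (S.isNilpotent_mulRight x) comap_le_ker))

theorem isMinimalIdeal_span_singleton (he₀ : e ≠ 0) (hmul : S.mul e = 0)
    (hmulRight : S.mulRight e = 0) : IsMinimalIdeal S (K ∙ e) := by
  refine ⟨fun x a ha => ?_, Submodule.span_singleton_eq_bot.not.2 he₀,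
    fun J _ hJ => (nonzero_span_atom e he₀).le_iff.1 hJ⟩
  obtain ⟨c, rfl⟩ := Submodule.mem_span_singleton.1 ha
  have hxe : S.mul x e = 0 := LinearMap.congr_fun hmulRight x
  simp [hmul, hxe]

theorem IsHomogeneous.span_singleton_eq_inf_sup_inf (he : S.IsHomogeneous e) :
    (K ∙ e) = (K ∙ e) ⊓ S.Z0 ⊔ (K ∙ e) ⊓ S.Z1 := by
  refine le_antisymm ?_ (sup_le inf_le_left inf_le_left)
  rcases he with he | he
  · exact le_sup_of_le_left (le_inf le_rfl ((Submodule.span_singleton_le_iff_mem e _).2 he))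
  · exact le_sup_of_le_right (le_inf le_rfl ((Submodule.span_singleton_le_iff_mem e _).2 he))

end Annihilator

end ZinbielSuper

/-- Every nonzero finite-dimensional Zinbiel superalgebra has a graded minimal ideal,
and a nonzero homogeneous element in its annihilator. -/
theorem exists_graded_minimal_ideal_and_homogeneous_ann (K : Type*) [Field K]
    (Z : Type*) [AddCommGroup Z] [Module K Z] [FiniteDimensional K Z] [Nontrivial Z]
    (S : ZinbielSuper K Z) :
    (∃ I : Submodule K Z, IsMinimalIdeal S I ∧ I = (I ⊓ S.Z0) ⊔ (I ⊓ S.Z1)) ∧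
    (∃ e : Z, e ≠ 0 ∧ (e ∈ S.Z0 ∨ e ∈ S.Z1) ∧
      ∀ x : Z, S.mul e x = 0 ∧ S.mul x e = 0) := by
  obtain ⟨e, he₀, he, hmul, hmulRight⟩ :=
    S.exists_isHomogeneous_mul_eq_zero_and_mulRight_eq_zero
  exact ⟨⟨K ∙ e, ZinbielSuper.isMinimalIdeal_span_singleton he₀ hmul hmulRight,
      he.span_singleton_eq_inf_sup_inf⟩,
    e, he₀, he, fun x => ⟨LinearMap.congr_fun hmul x, LinearMap.congr_fun hmulRight x⟩⟩
end

section
/- Let Z = Z₀ ⊕ Z₁ be a nonzero n-dimensional Zinbiel superalgebra over ℂ with dim Z₁ = 1 whose even part Z₀ has identically zero multiplication, and suppose the multiplication of Z is not identically zero. Then Z is isomorphic to the superalgebra with even basis e₁, …, e_{n−1}, odd basis f₁, and the only nonzero product of basis elements f₁·f₁ = e₁. -/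
open Module Submodule

variable {K : Type*} [Field K] {Z : Type*} [AddCommGroup Z] [Module K Z]

/-- From a basis `b` of a subspace `W` indexed by `Fin n`, the family of elements of `Z`
indexed by `1 ≤ t ≤ n`, with the convention that out-of-range indices give `0`. -/
noncomputable def sB {n : ℕ} {W : Submodule K Z} (b : Basis (Fin n) K W) : ℕ → Z :=
  fun t => if h : 1 ≤ t ∧ t ≤ n then ((b ⟨t - 1, by omega⟩ : W) : Z) else 0

/-!
Let `e` be even with `e·e = 0`. The Zinbiel identity gives `(f·e)·e = f·(2 e·e) = 0` for odd `f`,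
so right multiplication by `e` is a square-zero endomorphism of the line `Z₁`, hence zero; then
`e·(e·f) = (e·e)·f = 0` kills left multiplication by `e` in the same way. The only product left is
`Z₁ × Z₁ → Z₀`. If it is nonzero then so is `f·f` for any odd `f ≠ 0`, and `f·f` can be
taken as the first element of a basis of `Z₀`.
-/

section LinearAlgebra

variable {D V : Type*} [DivisionRing D] [AddCommGroup V] [Module D V]

theorem exists_basis_apply_eq {ι : Type*} (b : Basis ι D V) (i : ι) {v : V} (hv : v ≠ 0) :
    ∃ b' : Basis ι D V, b' i = v := by
  let e := LinearEquiv.toSpanNonzeroSingleton D V (b i) (b.ne_zero i)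
  obtain ⟨g, hg⟩ := Submodule.exists_linearEquiv_restrict_eq
    (e.symm ≪≫ₗ LinearEquiv.toSpanNonzeroSingleton D V v hv)
  have he : (e 1 : V) = b i := one_smul D (b i)
  have hgv : v = g (b i) := by simpa [he] using hg (e 1)
  exact ⟨b.map g, hgv.symm⟩

variable {W : Submodule D V} (hW : finrank D W = 1)
include hW

theorem exists_smul_eq_of_mem_of_finrank_eq_one {x y : V} (hx : x ∈ W) (hx0 : x ≠ 0)
    (hy : y ∈ W) : ∃ c : D, c • x = y :=
  mem_span_singleton.1 (eq_span_singleton_of_mem_of_finrank_eq_one hW hx hx0 ▸ hy)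

theorem map_eq_zero_of_map_map_eq_zero {T : V →ₗ[D] V} {x : V} (hx : x ∈ W) (hTx : T x ∈ W)
    (hTTx : T (T x) = 0) : T x = 0 := by
  by_contra hne
  obtain ⟨c, hc⟩ := exists_smul_eq_of_mem_of_finrank_eq_one hW hTx hne hx
  apply hne
  rw [← hc, map_smul, hTTx, smul_zero]

end LinearAlgebra

theorem sB_mem {n : ℕ} {W : Submodule K Z} (b : Basis (Fin n) K W) (t : ℕ) : sB b t ∈ W := by
  unfold sB
  split_ifs
  · exact SetLike.coe_mem _
  · exact W.zero_mem

theorem sB_succ {n : ℕ} {W : Submodule K Z} (b : Basis (Fin n) K W) (i : Fin n) :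
    sB b (i + 1) = b i :=
  dif_pos ⟨Nat.le_add_left 1 i, i.isLt⟩

namespace ZinbielSuper

variable (S : ZinbielSuper K Z) (h1 : finrank K S.Z1 = 1)
include h1

theorem mul_odd_even_eq_zero {f e : Z} (hf : f ∈ S.Z1) (he : e ∈ S.Z0) (hee : S.mul e e = 0) :
    S.mul f e = 0 := by
  have hfee : S.mul (S.mul f e) e = 0 := by
    simpa only [hee, add_zero, map_zero] using
      S.zinb_even f e e (.inr hf) (.inl he) (.inl he) (.inl he)
  exact map_eq_zero_of_map_map_eq_zero h1 (T := S.mul.flip e) hf (S.mul10 f hf e he) hfee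

theorem mul_even_odd_eq_zero {e f : Z} (he : e ∈ S.Z0) (hf : f ∈ S.Z1) (hee : S.mul e e = 0) :
    S.mul e f = 0 := by
  have heef : S.mul e (S.mul e f) = 0 := by
    simpa only [hee, S.mul_odd_even_eq_zero h1 hf he hee, add_zero, map_zero,
      LinearMap.zero_apply] using
      (S.zinb_even e e f (.inl he) (.inl he) (.inr hf) (.inl he)).symm
  exact map_eq_zero_of_map_map_eq_zero h1 hf (S.mul01 e he f hf) heef

theorem exists_odd_mul_self_ne_zero (h00 : ∀ x ∈ S.Z0, ∀ y ∈ S.Z0, S.mul x y = 0)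
    (hne : ∃ a b : Z, S.mul a b ≠ 0) : ∃ f ∈ S.Z1, S.mul f f ≠ 0 := by
  obtain ⟨a, b, hab⟩ := hne
  obtain ⟨a₀, a₁, ha₀, ha₁, rfl⟩ := codisjoint_iff_exists_add_eq.mp S.compl.codisjoint a
  obtain ⟨b₀, b₁, hb₀, hb₁, rfl⟩ := codisjoint_iff_exists_add_eq.mp S.compl.codisjoint b
  have hodd : S.mul (a₀ + a₁) (b₀ + b₁) = S.mul a₁ b₁ := by
    simp only [map_add, LinearMap.add_apply, h00 a₀ ha₀ b₀ hb₀,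
      S.mul_odd_even_eq_zero h1 ha₁ hb₀ (h00 b₀ hb₀ b₀ hb₀),
      S.mul_even_odd_eq_zero h1 ha₀ hb₁ (h00 a₀ ha₀ a₀ ha₀), zero_add]
  rw [hodd] at hab
  have hb₁_ne : b₁ ≠ 0 := by
    rintro rfl
    exact hab (map_zero _)
  obtain ⟨c, rfl⟩ := exists_smul_eq_of_mem_of_finrank_eq_one h1 hb₁ hb₁_ne ha₁
  refine ⟨b₁, hb₁, fun hbb => hab ?_⟩
  rw [map_smul, LinearMap.smul_apply, hbb, smul_zero]

theorem finrank_Z0 [FiniteDimensional K Z] : finrank K S.Z0 = finrank K Z - 1 := by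
  rw [← finrank_add_eq_of_isCompl S.compl, h1, Nat.add_sub_cancel]

theorem exists_bases_mul_self_eq [FiniteDimensional K Z] {f : Z} (hf : f ∈ S.Z1)
    (hff : S.mul f f ≠ 0) :
    ∃ (b0 : Basis (Fin (finrank K Z - 1)) K S.Z0) (b1 : Basis (Fin 1) K S.Z1),
      S.mul (b1 0 : Z) (b1 0 : Z) = sB b0 1 := by
  let v : S.Z0 := ⟨S.mul f f, S.mul11 f hf f hf⟩
  have hv : v ≠ 0 := fun h => hff (congrArg Subtype.val h)
  have hpos : 0 < finrank K Z - 1 :=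
    S.finrank_Z0 h1 ▸ finrank_pos_iff_exists_ne_zero.2 ⟨v, hv⟩
  obtain ⟨b0, hb0⟩ :=
    exists_basis_apply_eq (finBasisOfFinrankEq K S.Z0 (S.finrank_Z0 h1)) ⟨0, hpos⟩ hv
  have hf0 : (⟨f, hf⟩ : S.Z1) ≠ 0 := fun h => hff <| by
    rw [show f = 0 from congrArg Subtype.val h, map_zero]
  refine ⟨b0, FiniteDimensional.basisSingleton (Fin 1) h1 ⟨f, hf⟩ hf0, ?_⟩
  rw [FiniteDimensional.basisSingleton_apply]
  exact (congrArg Subtype.val hb0).symm.trans (sB_succ b0 ⟨0, hpos⟩).symm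

end ZinbielSuper

theorem type_n1_1_zero_even_classification_general [FiniteDimensional K Z]
    (S : ZinbielSuper K Z)
    (h1 : finrank K S.Z1 = 1)
    (h00 : ∀ x ∈ S.Z0, ∀ y ∈ S.Z0, S.mul x y = 0)
    (hne : ∃ a b : Z, S.mul a b ≠ 0) :
    ∃ (b0 : Basis (Fin (finrank K Z - 1)) K S.Z0) (b1 : Basis (Fin 1) K S.Z1),
      S.mul (b1 0 : Z) (b1 0 : Z) = sB b0 1 ∧
      (∀ i j : ℕ, 1 ≤ i → i ≤ finrank K Z - 1 → 1 ≤ j → j ≤ finrank K Z - 1 →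
        S.mul (sB b0 i) (sB b0 j) = 0) ∧
      (∀ i : ℕ, 1 ≤ i → i ≤ finrank K Z - 1 →
        S.mul (sB b0 i) (b1 0 : Z) = 0 ∧ S.mul (b1 0 : Z) (sB b0 i) = 0) := by
  obtain ⟨f, hf, hff⟩ := S.exists_odd_mul_self_ne_zero h1 h00 hne
  obtain ⟨b0, b1, hb⟩ := S.exists_bases_mul_self_eq h1 hf hff
  have hsq (i : ℕ) : S.mul (sB b0 i) (sB b0 i) = 0 := h00 _ (sB_mem b0 i) _ (sB_mem b0 i)
  refine ⟨b0, b1, hb, fun i j _ _ _ _ => h00 _ (sB_mem b0 i) _ (sB_mem b0 j), fun i _ _ => ?_⟩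
  exact ⟨S.mul_even_odd_eq_zero h1 (sB_mem b0 i) (b1 0).2 (hsq i),
    S.mul_odd_even_eq_zero h1 (b1 0).2 (sB_mem b0 i) (hsq i)⟩

/-- A nonzero `n`-dimensional complex Zinbiel superalgebra of type `(n−1, 1)` with zero
even multiplication and nonzero multiplication is isomorphic to the superalgebra with
even basis `e₁, …, e_{n−1}`, odd basis `f₁`, and only nonzero product `f₁·f₁ = e₁`. -/
theorem type_n1_1_zero_even_classification
    {Z : Type*} [AddCommGroup Z] [Module ℂ Z] [FiniteDimensional ℂ Z]
    (S : ZinbielSuper ℂ Z)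
    (h1 : finrank ℂ S.Z1 = 1)
    (h00 : ∀ x ∈ S.Z0, ∀ y ∈ S.Z0, S.mul x y = 0)
    (hne : ∃ a b : Z, S.mul a b ≠ 0) :
    ∃ (b0 : Basis (Fin (finrank ℂ Z - 1)) ℂ S.Z0) (b1 : Basis (Fin 1) ℂ S.Z1),
      S.mul (b1 0 : Z) (b1 0 : Z) = sB b0 1 ∧
      (∀ i j : ℕ, 1 ≤ i → i ≤ finrank ℂ Z - 1 → 1 ≤ j → j ≤ finrank ℂ Z - 1 →
        S.mul (sB b0 i) (sB b0 j) = 0) ∧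
      (∀ i : ℕ, 1 ≤ i → i ≤ finrank ℂ Z - 1 →
        S.mul (sB b0 i) (b1 0 : Z) = 0 ∧ S.mul (b1 0 : Z) (sB b0 i) = 0) :=
  type_n1_1_zero_even_classification_general S h1 h00 hne
end
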